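/- (Discrete analogue of Lemma 3, supporting Theorem 2 of the paper.) Let d ≥ 1, let g₁, g₂ : ℝ^d → ℝ^d be C^∞ maps with ⟨g₁(y), g₂(y)⟩ = 0 for all y ∈ ℝ^d, and let σ : ℝ → ℝ^d be C^∞. Let s ≥ 1 and let r, k ≥ s. Let (ĉ_ℓ, b̂_ℓ)_{ℓ=1}^r be a quadrature exact for polynomials of degree ≤ 2r−1 on [0,1], and (c_ℓ, b_ℓ)_{ℓ=1}^k a quadrature exact for polynomials of degree ≤ 2k−1 on [0,1]. Then b̂(h) := Σ_{j=0}^{s−1} ⟨Σ_{ℓ=1}^r b̂_ℓ P_j(ĉ_ℓ) g₁(σ(ĉ_ℓ h)), Σ_{ℓ=1}^k b_ℓ P_j(c_ℓ) g₂(σ(c_ℓ h))⟩ is O(h^{2s}) as h → 0⁺. -/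

import Mathlib

open MeasureTheory Polynomial
open scoped RealInnerProductSpace

/-- The shifted Legendre polynomial `P j`, orthonormal on `[0,1]`. -/
noncomputable def legP (j : ℕ) : ℝ → ℝ := fun x =>
  (Real.sqrt (2 * j + 1) / (Nat.factorial j)) *
    (Polynomial.derivative^[j] ((Polynomial.X ^ 2 - Polynomial.X) ^ j)).eval x


noncomputable def polyI (p : ℝ[X]) : ℝ := ∫ x in (0:ℝ)..1, p.eval x

lemma polyI_add (p q : ℝ[X]) : polyI (p + q) = polyI p + polyI q := by
  unfold polyI
  simp only [eval_add]
  exact intervalIntegral.integral_add (p.continuous.intervalIntegrable _ _)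
    (q.continuous.intervalIntegrable _ _)

lemma polyI_C_mul (a : ℝ) (p : ℝ[X]) : polyI (C a * p) = a * polyI p := by
  unfold polyI
  simp

lemma polyI_sub (p q : ℝ[X]) : polyI (p - q) = polyI p - polyI q := by
  have h : p - q = p + C (-1) * q := by simp [sub_eq_add_neg]
  rw [h, polyI_add, polyI_C_mul]; ring

lemma polyI_derivative (p : ℝ[X]) : polyI (derivative p) = p.eval 1 - p.eval 0 := by
  unfold polyI
  exact intervalIntegral.integral_eq_sub_of_hasDerivAt (fun x _ => p.hasDerivAt x)
    ((derivative p).continuous.intervalIntegrable _ _)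

lemma polyI_beta (b : ℕ) : ∀ a : ℕ, polyI (X ^ a * (X - 1) ^ b) * ((a + b + 1).factorial : ℝ)
    = (-1) ^ b * a.factorial * b.factorial := by
  induction b with
  | zero =>
    intro a
    simp only [polyI, pow_zero, mul_one, eval_pow, eval_X, integral_pow, add_zero,
      Nat.factorial_succ]
    have : (a : ℝ) + 1 ≠ 0 := by positivity
    push_cast
    field_simp
    simp
  | succ b ih =>
    intro a
    have h1 := polyI_derivative (X ^ (a + 1) * (X - 1) ^ (b + 1))
    have h2 : derivative ((X : ℝ[X]) ^ (a + 1) * (X - 1) ^ (b + 1)) =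
        C ((a : ℝ) + 1) * (X ^ a * (X - 1) ^ (b + 1)) +
        C ((b : ℝ) + 1) * (X ^ (a + 1) * (X - 1) ^ b) := by
      simp [derivative_mul, derivative_pow]
      ring
    rw [h2, polyI_add, polyI_C_mul, polyI_C_mul] at h1
    simp at h1
    have h3 := ih (a + 1)
    have e : a + 1 + b + 1 = a + (b + 1) + 1 := by ring
    rw [e] at h3
    rw [Nat.factorial_succ a] at h3
    rw [Nat.factorial_succ b]
    push_cast at h3 ⊢
    have : (a : ℝ) + 1 ≠ 0 := by positivity
    apply mul_left_cancel₀ this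
    rw [pow_succ (-1 : ℝ)]
    linear_combination ((a + (b + 1) + 1).factorial : ℝ) * h1 - (b + 1 : ℝ) * h3

lemma polyI_parts (j : ℕ) (m : ℕ) : m ≤ j → ∀ q : ℝ[X],
    polyI (q * derivative^[m] ((X ^ 2 - X) ^ j)) =
      (-1) ^ m * polyI (derivative^[m] q * (X ^ 2 - X) ^ j) := by
  induction m with
  | zero => intro _ q; simp
  | succ m ih =>
    intro hm q
    have h1 := polyI_derivative (q * derivative^[m] ((X ^ 2 - X) ^ j))
    have hd : ((X : ℝ[X]) ^ 2 - X) ∣ derivative^[m] ((X ^ 2 - X) ^ j) :=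
      (dvd_pow_self _ (by omega)).trans (pow_sub_dvd_iterate_derivative_pow _ j m)
    obtain ⟨u, hu⟩ := hd
    have e0 : (derivative^[m] (((X : ℝ[X]) ^ 2 - X) ^ j)).eval 0 = 0 := by rw [hu]; simp
    have e1 : (derivative^[m] (((X : ℝ[X]) ^ 2 - X) ^ j)).eval 1 = 0 := by rw [hu]; simp
    rw [derivative_mul, polyI_add, eval_mul, eval_mul, e0, e1, ih (by omega),
      ← Function.iterate_succ_apply' (⇑derivative), ← Function.iterate_succ_apply (⇑derivative)] at h1
    rw [pow_succ (-1 : ℝ)]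
    linear_combination h1

noncomputable def legPoly (j : ℕ) : ℝ[X] :=
  C (Real.sqrt (2 * j + 1) / (Nat.factorial j)) * derivative^[j] ((X ^ 2 - X) ^ j)

lemma legP_eq (j : ℕ) (x : ℝ) : legP j x = (legPoly j).eval x := by
  simp [legP, legPoly]

lemma w_monic : ((X : ℝ[X]) ^ 2 - X).Monic := by monicity!

lemma w_natDegree : ((X : ℝ[X]) ^ 2 - X).natDegree = 2 := by compute_degree!

lemma wpow_natDegree (j : ℕ) : (((X : ℝ[X]) ^ 2 - X) ^ j).natDegree = 2 * j := by
  rw [w_monic.natDegree_pow, w_natDegree]; ring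

lemma wpow_coeff (j : ℕ) : (((X : ℝ[X]) ^ 2 - X) ^ j).coeff (j + j) = 1 := by
  have := (w_monic.pow j).coeff_natDegree
  rwa [wpow_natDegree, two_mul] at this

lemma legPoly_natDegree (j : ℕ) : (legPoly j).natDegree ≤ j := by
  refine (natDegree_C_mul_le _ _).trans ((natDegree_iterate_derivative _ _).trans ?_)
  rw [wpow_natDegree]; omega

lemma legPoly_coeff (j : ℕ) : (legPoly j).coeff j ≠ 0 := by
  rw [legPoly, coeff_C_mul, coeff_iterate_derivative, wpow_coeff]
  have h1 : Real.sqrt (2 * j + 1) ≠ 0 := by positivity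
  have h2 : ((j + j).descFactorial j) ≠ 0 := by
    rw [Ne, Nat.descFactorial_eq_zero_iff_lt]; omega
  simp [h1, h2, Nat.factorial_ne_zero]

lemma legPoly_orth (j : ℕ) (q : ℝ[X]) (hq : q.degree < j) : polyI (q * legPoly j) = 0 := by
  rw [legPoly, mul_left_comm, polyI_C_mul, polyI_parts j j le_rfl,
    iterate_derivative_eq_zero_of_degree_lt hq]
  simp [polyI]

lemma legPoly_norm (j : ℕ) : polyI (legPoly j * legPoly j) = 1 := by
  have hD : derivative^[j] (derivative^[j] (((X : ℝ[X]) ^ 2 - X) ^ j)) =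
      C ((j + j).factorial : ℝ) := by
    rw [← Function.iterate_add_apply]
    have hdeg := natDegree_iterate_derivative (((X : ℝ[X]) ^ 2 - X) ^ j) (j + j)
    rw [wpow_natDegree] at hdeg
    rw [eq_C_of_natDegree_le_zero (p := derivative^[j+j] _) (by omega), coeff_iterate_derivative]
    simp [wpow_coeff, Nat.descFactorial_self]
  have hw : ((X : ℝ[X]) ^ 2 - X) ^ j = X ^ j * (X - 1) ^ j := by
    rw [← mul_pow]; ring
  have hb := polyI_beta j j
  have hp := polyI_parts j j le_rfl (derivative^[j] (((X : ℝ[X]) ^ 2 - X) ^ j))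
  rw [hD, polyI_C_mul] at hp
  have hs : Real.sqrt (2 * j + 1) * Real.sqrt (2 * j + 1) = 2 * j + 1 :=
    Real.mul_self_sqrt (by positivity)
  have hm : ((-1 : ℝ) ^ j) * (-1) ^ j = 1 := by rw [← mul_pow]; simp
  have hf : (j.factorial : ℝ) ≠ 0 := by positivity
  rw [Nat.factorial_succ] at hb
  push_cast at hb
  rw [← hw] at hb
  set B := polyI (((X : ℝ[X]) ^ 2 - X) ^ j)
  have : polyI (legPoly j * legPoly j) = (Real.sqrt (2 * j + 1) / (Nat.factorial j)) *
    ((Real.sqrt (2 * j + 1) / (Nat.factorial j)) * ((-1) ^ j * (((j + j).factorial : ℝ) * B))) := by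
    rw [← hp, ← polyI_C_mul, ← polyI_C_mul]
    congr 1
    simp only [legPoly]
    ring
  rw [this]
  field_simp
  linear_combination ((-1) ^ j * ((j + j).factorial : ℝ) * B) * hs + (-1)^j * hb +
    (j.factorial : ℝ)^2 * hm

lemma legPoly_expand (s : ℕ) : ∀ p : ℝ[X], p.degree < s →
    ∑ j ∈ Finset.range s, C (polyI (p * legPoly j)) * legPoly j = p := by
  induction s with
  | zero =>
    intro p hp
    have : p = 0 := by simpa using hp
    simp [this]
  | succ s ih =>
    intro p hp
    set α := p.coeff s / (legPoly s).coeff s with hα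
    set q := p - C α * legPoly s with hq
    have hqd : q.degree < s := by
      rw [degree_lt_iff_coeff_zero]
      intro m hm
      rcases hm.eq_or_lt with rfl | hm
      · simp [hq, hα, legPoly_coeff]
      · have h1 : p.coeff m = 0 := coeff_eq_zero_of_degree_lt (hp.trans_le (by exact_mod_cast hm))
        have h2 : (legPoly s).coeff m = 0 :=
          coeff_eq_zero_of_natDegree_lt ((legPoly_natDegree s).trans_lt hm)
        simp [hq, h1, h2]
    have hpq : p = q + C α * legPoly s := by simp [hq]
    have hs : polyI (p * legPoly s) = α := by
      rw [hpq, add_mul, polyI_add, legPoly_orth s q hqd, mul_assoc, polyI_C_mul, legPoly_norm]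
      simp
    have hj : ∀ j ∈ Finset.range s, C (polyI (p * legPoly j)) * legPoly j
        = C (polyI (q * legPoly j)) * legPoly j := by
      intro j hj
      have hlt : (legPoly j).degree < s :=
        (degree_le_of_natDegree_le (legPoly_natDegree j)).trans_lt
          (by exact_mod_cast Finset.mem_range.1 hj)
      rw [hpq, add_mul, polyI_add, mul_assoc, polyI_C_mul, mul_comm (legPoly s),
        legPoly_orth s _ hlt]
      simp
    rw [Finset.sum_range_succ, Finset.sum_congr rfl hj, ih q hqd, hs, ← hpq]

/-- one-sided computation: the polynomial on the second slot has degree `< s`. -/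
lemma quad_K {r k s : ℕ} (ch bh : Fin r → ℝ) (c b : Fin k → ℝ)
    (hr : s ≤ r) (hk : s ≤ k)
    (hquadr : ∀ q : Polynomial ℝ, q.natDegree ≤ 2 * r - 1 →
      ∑ ℓ, bh ℓ * q.eval (ch ℓ) = ∫ x in (0:ℝ)..1, q.eval x)
    (hquadk : ∀ q : Polynomial ℝ, q.natDegree ≤ 2 * k - 1 →
      ∑ ℓ, b ℓ * q.eval (c ℓ) = ∫ x in (0:ℝ)..1, q.eval x)
    (n m : ℕ) (hnm : n + m < 2 * s) (hm : m < s) :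
    ∑ j ∈ Finset.range s, (∑ ℓ, bh ℓ * legP j (ch ℓ) * ch ℓ ^ n) *
      (∑ ℓ, b ℓ * legP j (c ℓ) * c ℓ ^ m) = polyI (X ^ (n + m)) := by
  have h1 : ∀ j ∈ Finset.range s, (∑ ℓ, b ℓ * legP j (c ℓ) * c ℓ ^ m)
      = polyI (X ^ m * legPoly j) := by
    intro j hj
    have := Finset.mem_range.1 hj
    rw [polyI, ← hquadk]
    · refine Finset.sum_congr rfl fun ℓ _ => ?_
      rw [legP_eq]; simp; ring
    · refine natDegree_mul_le.trans ?_
      have := legPoly_natDegree j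
      rw [natDegree_X_pow]; omega
  have hex := legPoly_expand s (X ^ m) (by rw [degree_X_pow]; exact_mod_cast hm)
  calc _ = ∑ j ∈ Finset.range s, ∑ ℓ, bh ℓ * ch ℓ ^ n *
        (C (polyI (X ^ m * legPoly j)) * legPoly j).eval (ch ℓ) := by
        refine Finset.sum_congr rfl fun j hj => ?_
        rw [h1 j hj, Finset.sum_mul]
        refine Finset.sum_congr rfl fun ℓ _ => ?_
        rw [legP_eq]; simp; ring
    _ = ∑ ℓ, bh ℓ * (X ^ (n + m) : ℝ[X]).eval (ch ℓ) := by
        rw [Finset.sum_comm]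
        refine Finset.sum_congr rfl fun ℓ _ => ?_
        rw [← Finset.mul_sum, ← eval_finsetSum, hex]
        simp; ring
    _ = _ := by
        rw [hquadr]
        · rfl
        · rw [natDegree_X_pow]; omega

open Asymptotics Filter Topology in
lemma taylor_bigO {E : Type*} [NormedAddCommGroup E] [NormedSpace ℝ E] (f : ℝ → E)
    (hf : ContDiff ℝ (⊤ : ℕ∞) f) (N : ℕ) (hN : 1 ≤ N) :
    ∃ a : ℕ → E, ∀ c ∈ Set.Icc (0:ℝ) 1,
      (fun h : ℝ => f (c * h) - ∑ n ∈ Finset.range N, (c * h) ^ n • a n)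
        =O[𝓝[>] (0:ℝ)] (fun h => h ^ N) := by
  obtain ⟨n, rfl⟩ : ∃ n, N = n + 1 := ⟨N - 1, by omega⟩
  have hf' : ContDiffOn ℝ (n + 1) f (Set.Icc 0 1) :=
    (hf.of_le (by exact_mod_cast le_top)).contDiffOn
  obtain ⟨M, hM⟩ := exists_taylor_mean_remainder_bound (zero_le_one (α := ℝ)) hf'
  refine ⟨fun k => (k.factorial : ℝ)⁻¹ • iteratedDerivWithin k f (Set.Icc 0 1) 0, fun c hc => ?_⟩
  refine IsBigO.of_bound (max M 0) ?_
  filter_upwards [Ioc_mem_nhdsGT (zero_lt_one (α := ℝ))] with h hh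
  have hch0 : 0 ≤ c * h := mul_nonneg hc.1 hh.1.le
  have hch1 : c * h ≤ h := mul_le_of_le_one_left hh.1.le hc.2
  have := hM (c * h) ⟨hch0, hch1.trans hh.2⟩
  rw [taylor_within_apply] at this
  simp only [sub_zero] at this
  have e : ∑ k ∈ Finset.range (n + 1), (c * h) ^ k •
      ((k.factorial : ℝ)⁻¹ • iteratedDerivWithin k f (Set.Icc 0 1) 0) =
      ∑ k ∈ Finset.range (n + 1), ((k.factorial : ℝ)⁻¹ * (c * h) ^ k) •
        iteratedDerivWithin k f (Set.Icc 0 1) 0 := by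
    refine Finset.sum_congr rfl fun k _ => ?_
    rw [smul_smul, mul_comm]
  rw [e]
  refine this.trans ?_
  rw [Real.norm_of_nonneg (pow_nonneg hh.1.le _)]
  calc M * (c * h) ^ (n + 1) ≤ max M 0 * (c * h) ^ (n + 1) := by gcongr; exact le_max_left _ _
    _ ≤ _ := by gcongr

open Asymptotics Filter Topology in
lemma inner_bigO {E : Type*} [NormedAddCommGroup E] [InnerProductSpace ℝ E] {l : Filter ℝ}
    {u v : ℝ → E} {p q : ℝ → ℝ} (hu : u =O[l] p) (hv : v =O[l] q) :
    (fun h => ⟪u h, v h⟫) =O[l] (fun h => p h * q h) := by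
  refine IsBigO.trans (IsBigO.of_bound 1 ?_) (hu.norm_left.mul hv.norm_left)
  filter_upwards with h
  have := norm_inner_le_norm (𝕜 := ℝ) (u h) (v h)
  simpa using this

open Asymptotics Filter Topology in
lemma inner_perturb {E : Type*} [NormedAddCommGroup E] [InnerProductSpace ℝ E] {l : Filter ℝ}
    {u v u' v' : ℝ → E} {p : ℝ → ℝ} (hu : (fun h => u h - u' h) =O[l] p)
    (hv : (fun h => v h - v' h) =O[l] p) (hu' : u' =O[l] (fun _ => (1:ℝ)))
    (hv' : v =O[l] (fun _ => (1:ℝ))) :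
    (fun h => ⟪u h, v h⟫ - ⟪u' h, v' h⟫) =O[l] p := by
  have h1 := (inner_bigO hu hv').add ((inner_bigO hu' hv).congr_right
    (g₂ := fun h => p h * 1) (fun h => by ring))
  refine (h1.congr_left ?_).congr_right ?_
  · intro h
    simp only [inner_sub_left, inner_sub_right]
    ring
  · intro h; ring

open Asymptotics Filter Topology in
lemma cont_bigO_one {E : Type*} [NormedAddCommGroup E] {u : ℝ → E} (hu : Continuous u) :
    u =O[𝓝[>] (0:ℝ)] (fun _ => (1:ℝ)) :=
  ((hu.tendsto 0).mono_left nhdsWithin_le_nhds).isBigO_one ℝ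

open Asymptotics Filter Topology in
/-- discrete analogue of Lemma 3, supporting Theorem 2 of the paper.
With `g₁, g₂` smooth and pointwise orthogonal, `σ` smooth, `r, k ≥ s ≥ 1`, and quadratures of
exactness degrees `2r-1` and `2k-1` respectively,
`b̂(h) := ∑_{j<s} ⟨∑_ℓ b̂_ℓ P_j(ĉ_ℓ) g₁(σ(ĉ_ℓ h)), ∑_ℓ b_ℓ P_j(c_ℓ) g₂(σ(c_ℓ h))⟩`
is `O(h^{2s})` as `h → 0⁺`. -/
theorem stmt10 (d : ℕ) (hd : 1 ≤ d)
    (g₁ g₂ : EuclideanSpace ℝ (Fin d) → EuclideanSpace ℝ (Fin d))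
    (hg₁ : ContDiff ℝ (⊤ : ℕ∞) g₁) (hg₂ : ContDiff ℝ (⊤ : ℕ∞) g₂)
    (horth : ∀ y, ⟪g₁ y, g₂ y⟫ = 0)
    (σ : ℝ → EuclideanSpace ℝ (Fin d)) (hσ : ContDiff ℝ (⊤ : ℕ∞) σ)
    (s r k : ℕ) (hs : 1 ≤ s) (hr : s ≤ r) (hk : s ≤ k)
    (ch bh : Fin r → ℝ) (hch : ∀ ℓ, ch ℓ ∈ Set.Icc (0:ℝ) 1)
    (hquadr : ∀ q : Polynomial ℝ, q.natDegree ≤ 2 * r - 1 →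
      ∑ ℓ, bh ℓ * q.eval (ch ℓ) = ∫ x in (0:ℝ)..1, q.eval x)
    (c b : Fin k → ℝ) (hc : ∀ ℓ, c ℓ ∈ Set.Icc (0:ℝ) 1)
    (hquadk : ∀ q : Polynomial ℝ, q.natDegree ≤ 2 * k - 1 →
      ∑ ℓ, b ℓ * q.eval (c ℓ) = ∫ x in (0:ℝ)..1, q.eval x) :
    ∃ C > (0:ℝ), ∃ h₀ > (0:ℝ), ∀ h : ℝ, 0 < h → h ≤ h₀ →
      |∑ j ∈ Finset.range s,
          ⟪∑ ℓ, (bh ℓ * legP j (ch ℓ)) • g₁ (σ (ch ℓ * h)),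
           ∑ ℓ, (b ℓ * legP j (c ℓ)) • g₂ (σ (c ℓ * h))⟫| ≤ C * h ^ (2 * s) := by

  set f₁ : ℝ → EuclideanSpace ℝ (Fin d) := fun t => g₁ (σ t) with hf₁
  set f₂ : ℝ → EuclideanSpace ℝ (Fin d) := fun t => g₂ (σ t) with hf₂
  have hf₁s : ContDiff ℝ (⊤ : ℕ∞) f₁ := hg₁.comp hσ
  have hf₂s : ContDiff ℝ (⊤ : ℕ∞) f₂ := hg₂.comp hσ
  have hf₁c : Continuous f₁ := hf₁s.continuous
  have hf₂c : Continuous f₂ := hf₂s.continuous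
  set N := 2 * s with hN
  obtain ⟨a₁, ha₁⟩ := taylor_bigO f₁ hf₁s N (by omega)
  obtain ⟨a₂, ha₂⟩ := taylor_bigO f₂ hf₂s N (by omega)
  set T₁ : ℝ → EuclideanSpace ℝ (Fin d) := fun t => ∑ n ∈ Finset.range N, t ^ n • a₁ n with hT₁
  set T₂ : ℝ → EuclideanSpace ℝ (Fin d) := fun t => ∑ n ∈ Finset.range N, t ^ n • a₂ n with hT₂
  have hT₁c : Continuous T₁ := by fun_prop
  have hT₂c : Continuous T₂ := by fun_prop
  -- replace the functions by their Taylor polynomials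
  have step1 : (fun h : ℝ => ∑ j ∈ Finset.range s,
      (⟪∑ ℓ, (bh ℓ * legP j (ch ℓ)) • f₁ (ch ℓ * h), ∑ ℓ, (b ℓ * legP j (c ℓ)) • f₂ (c ℓ * h)⟫ -
       ⟪∑ ℓ, (bh ℓ * legP j (ch ℓ)) • T₁ (ch ℓ * h), ∑ ℓ, (b ℓ * legP j (c ℓ)) • T₂ (c ℓ * h)⟫))
      =O[𝓝[>] (0:ℝ)] (fun h => h ^ N) := by
    refine IsBigO.fun_sum fun j _ => inner_perturb ?_ ?_ (cont_bigO_one (by fun_prop))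
      (cont_bigO_one (by fun_prop))
    · simp only [← Finset.sum_sub_distrib, ← smul_sub]
      exact IsBigO.fun_sum fun ℓ _ => (ha₁ (ch ℓ) (hch ℓ)).const_smul_left (bh ℓ * legP j (ch ℓ))
    · simp only [← Finset.sum_sub_distrib, ← smul_sub]
      exact IsBigO.fun_sum fun ℓ _ => (ha₂ (c ℓ) (hc ℓ)).const_smul_left (b ℓ * legP j (c ℓ))
  have step2 : (fun h : ℝ => ∑ ℓ, bh ℓ * ⟪T₁ (ch ℓ * h), T₂ (ch ℓ * h)⟫)
      =O[𝓝[>] (0:ℝ)] (fun h => h ^ N) := by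
    refine IsBigO.fun_sum fun ℓ _ => IsBigO.const_mul_left ?_ _
    have := (inner_perturb (ha₁ (ch ℓ) (hch ℓ)) (ha₂ (ch ℓ) (hch ℓ))
      (cont_bigO_one (by fun_prop)) (cont_bigO_one (by fun_prop))).neg_left
    refine this.congr_left fun h => ?_
    simp only [hf₁, hf₂, horth, hT₁, hT₂]
    ring
  set K : ℕ → ℕ → ℝ := fun n m => ∑ j ∈ Finset.range s,
    (∑ ℓ, bh ℓ * legP j (ch ℓ) * ch ℓ ^ n) * (∑ ℓ, b ℓ * legP j (c ℓ) * c ℓ ^ m) with hK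
  have e1 : ∀ h : ℝ, ∑ j ∈ Finset.range s,
       ⟪∑ ℓ, (bh ℓ * legP j (ch ℓ)) • T₁ (ch ℓ * h), ∑ ℓ, (b ℓ * legP j (c ℓ)) • T₂ (c ℓ * h)⟫
      = ∑ n ∈ Finset.range N, ∑ m ∈ Finset.range N, h ^ (n + m) * (⟪a₁ n, a₂ m⟫ * K n m) := by
    intro h
    have hU : ∀ j, ∑ ℓ, (bh ℓ * legP j (ch ℓ)) • T₁ (ch ℓ * h) = ∑ n ∈ Finset.range N,
        (h ^ n * ∑ ℓ, bh ℓ * legP j (ch ℓ) * ch ℓ ^ n) • a₁ n := by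
      intro j
      simp only [hT₁, Finset.smul_sum, Finset.mul_sum, Finset.sum_smul, smul_smul]
      rw [Finset.sum_comm]
      refine Finset.sum_congr rfl fun n _ => Finset.sum_congr rfl fun ℓ _ => ?_
      congr 1; ring
    have hV : ∀ j, ∑ ℓ, (b ℓ * legP j (c ℓ)) • T₂ (c ℓ * h) = ∑ n ∈ Finset.range N,
        (h ^ n * ∑ ℓ, b ℓ * legP j (c ℓ) * c ℓ ^ n) • a₂ n := by
      intro j
      simp only [hT₂, Finset.smul_sum, Finset.mul_sum, Finset.sum_smul, smul_smul]
      rw [Finset.sum_comm]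
      refine Finset.sum_congr rfl fun n _ => Finset.sum_congr rfl fun ℓ _ => ?_
      congr 1; ring
    simp only [hU, hV, sum_inner]
    simp only [inner_sum, real_inner_smul_left, real_inner_smul_right]
    rw [Finset.sum_comm]
    refine Finset.sum_congr rfl fun n _ => ?_
    rw [Finset.sum_comm]
    refine Finset.sum_congr rfl fun m _ => ?_
    rw [hK]
    simp only []
    rw [Finset.mul_sum, Finset.mul_sum]
    refine Finset.sum_congr rfl fun j _ => ?_
    rw [pow_add]
    ring
  have e2 : ∀ h : ℝ, ∑ ℓ, bh ℓ * ⟪T₁ (ch ℓ * h), T₂ (ch ℓ * h)⟫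
      = ∑ n ∈ Finset.range N, ∑ m ∈ Finset.range N, h ^ (n + m) * (⟪a₁ n, a₂ m⟫ *
        ∑ ℓ, bh ℓ * ch ℓ ^ (n + m)) := by
    intro h
    simp only [hT₁, hT₂, sum_inner]
    simp only [inner_sum, real_inner_smul_left, real_inner_smul_right,
      Finset.mul_sum]
    rw [Finset.sum_comm]
    refine Finset.sum_congr rfl fun n _ => ?_
    rw [Finset.sum_comm]
    refine Finset.sum_congr rfl fun m _ => Finset.sum_congr rfl fun ℓ _ => ?_
    ring
  have hKQ : ∀ n m, n + m < N → K n m = ∑ ℓ, bh ℓ * ch ℓ ^ (n + m) := by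
    intro n m hnm
    have hQ : ∑ ℓ, bh ℓ * ch ℓ ^ (n + m) = polyI (X ^ (n + m)) := by
      rw [polyI, ← hquadr _ (by rw [natDegree_X_pow]; omega)]
      simp
    rw [hQ]
    by_cases hm : m < s
    · exact quad_K ch bh c b hr hk hquadr hquadk n m hnm hm
    · rw [add_comm n m, ← quad_K c b ch bh hk hr hquadk hquadr m n (by omega) (by omega)]
      exact Finset.sum_congr rfl fun j _ => mul_comm _ _
  have step3 : (fun h : ℝ => ∑ n ∈ Finset.range N, ∑ m ∈ Finset.range N,
      (h ^ (n + m) * (⟪a₁ n, a₂ m⟫ * K n m) -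
        h ^ (n + m) * (⟪a₁ n, a₂ m⟫ * ∑ ℓ, bh ℓ * ch ℓ ^ (n + m))))
      =O[𝓝[>] (0:ℝ)] (fun h => h ^ N) := by
    refine IsBigO.fun_sum fun n _ => IsBigO.fun_sum fun m _ => ?_
    by_cases hnm : n + m < N
    · simp only [hKQ n m hnm, sub_self]
      exact isBigO_zero _ _
    · obtain ⟨p, hp⟩ := Nat.exists_eq_add_of_le (not_lt.1 hnm)
      have hp1 : (fun h : ℝ => h ^ (n + m)) =O[𝓝[>] (0:ℝ)] (fun h => h ^ N) := by
        have := (isBigO_refl (fun h : ℝ => h ^ N) (𝓝[>] (0:ℝ))).mul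
          (cont_bigO_one (u := fun h : ℝ => h ^ p) (by fun_prop))
        refine (this.congr_left fun h => ?_).congr_right fun h => ?_
        · rw [hp, pow_add]
        · ring
      refine (hp1.const_mul_left
        (⟪a₁ n, a₂ m⟫ * K n m - ⟪a₁ n, a₂ m⟫ * ∑ ℓ, bh ℓ * ch ℓ ^ (n + m))).congr_left fun h => ?_
      ring
  have total := (step1.add step3).add step2
  obtain ⟨C, hC, hb⟩ := total.exists_pos
  obtain ⟨h₀, hh₀, hsub⟩ := mem_nhdsGT_iff_exists_Ioc_subset.1 hb.bound
  refine ⟨C, hC, h₀, hh₀, fun h hpos hle => ?_⟩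
  have := hsub ⟨hpos, hle⟩
  simp only [Set.mem_ofPred_eq, Finset.sum_sub_distrib] at this
  rw [e1 h, e2 h, Real.norm_of_nonneg (pow_nonneg hpos.le _), Real.norm_eq_abs] at this
  convert this using 2
  simp only [hf₁, hf₂]
  ring
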